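/- arXiv:1310.7767 — 3 statements merged into one kernel-verified Lean document; each statement's English description precedes it below -/
import Mathlib

section
/- Let λ ∈ ℂ and let g₁, g₂ : ℂ → ℂ be entire functions such that g_j''(z) = (z³ + λ)·g_j(z) for all z ∈ ℂ (j = 1,2), and such that g_j(x)·x^{3/4}·e^{(2/5)·x^{5/2}} → 1 as x → +∞ along the positive real axis. Then g₁ = g₂. (The asymptotics uniquely determines the solution.) -/
open Complex Filter

lemma aux_decay (g : ℂ → ℂ)
    (h : Tendsto (fun x : ℝ =>
        g (x : ℂ) * ((x ^ ((3 : ℝ) / 4) : ℝ) : ℂ) *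
          Complex.exp ((2 / 5 : ℂ) * ((x ^ ((5 : ℝ) / 2) : ℝ) : ℂ)))
      atTop (nhds 1)) :
    ∀ᶠ x : ℝ in atTop, 1 ≤ x ∧ g x ≠ 0 ∧ ‖g x‖ * x ^ 4 ≤ 1875 := by
  have h1 := h.norm.eventually (gt_mem_nhds (show ‖(1:ℂ)‖ < 2 by simp))
  have h2 := h.eventually_ne (one_ne_zero)
  filter_upwards [h1, h2, eventually_ge_atTop (1:ℝ)] with x hx hx2 hx1
  refine ⟨hx1, ?_, ?_⟩
  · intro h0
    simp [h0] at hx2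
  have e1 : ‖Complex.exp ((2 / 5 : ℂ) * ((x ^ ((5 : ℝ) / 2) : ℝ) : ℂ))‖
      = Real.exp (2 / 5 * x ^ ((5 : ℝ) / 2)) := by
    have : ((2 / 5 : ℂ) * ((x ^ ((5 : ℝ) / 2) : ℝ) : ℂ))
      = ((2 / 5 * x ^ ((5 : ℝ) / 2) : ℝ) : ℂ) := by push_cast; rfl
    rw [this, Complex.norm_exp_ofReal]
  have e2 : ‖((x ^ ((3 : ℝ) / 4) : ℝ) : ℂ)‖ = x ^ ((3 : ℝ) / 4) := by
    rw [Complex.norm_real, Real.norm_of_nonneg (by positivity)]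
  rw [norm_mul, norm_mul, e1, e2] at hx
  have a1 : 1 ≤ x ^ ((3 : ℝ) / 4) := Real.one_le_rpow hx1 (by norm_num)
  have a2 : x ≤ x ^ ((5 : ℝ) / 2) := by
    simpa using Real.rpow_le_rpow_of_exponent_le hx1 (show (1:ℝ) ≤ 5/2 by norm_num)
  have a3 : Real.exp (2/5 * x) ≤ Real.exp (2 / 5 * x ^ ((5 : ℝ) / 2)) :=
    Real.exp_le_exp.2 (by linarith)
  have a4 := Real.pow_div_factorial_le_exp (2/5*x) (by positivity) 4
  have a5 : x ^ 4 * (2/1875) ≤ Real.exp (2 / 5 * x ^ ((5 : ℝ) / 2)) := by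
    refine le_trans (le_of_eq ?_) (a4.trans a3)
    simp [Nat.factorial]; ring
  have n0 := norm_nonneg (g x)
  have a6 : ‖g x‖ * 1 * (x ^ 4 * (2/1875)) ≤
     ‖g x‖ * x ^ ((3 : ℝ) / 4) * Real.exp (2 / 5 * x ^ ((5 : ℝ) / 2)) := by gcongr
  linarith

lemma aux_deriv (lam : ℂ) (g : ℂ → ℂ) (hd : Differentiable ℂ g)
    (he : ∀ z : ℂ, deriv (deriv g) z = (z ^ 3 + lam) * g z)
    (h : ∀ᶠ x : ℝ in atTop, 1 ≤ x ∧ g x ≠ 0 ∧ ‖g x‖ * x ^ 4 ≤ 1875) :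
    ∃ K, ∀ᶠ x : ℝ in atTop, ‖deriv g x‖ ≤ K := by
  have hd' : Differentiable ℂ (deriv g) := hd.deriv
  obtain ⟨X, hX⟩ := eventually_atTop.1 h
  set C := (1 + ‖lam‖) * 1875
  have hC : ∀ x : ℝ, X ≤ x → ‖deriv (deriv g) x‖ ≤ C := by
    intro x hx
    obtain ⟨h1, -, h3⟩ := hX x hx
    rw [he, norm_mul]
    have : ‖(x:ℂ) ^ 3 + lam‖ ≤ (1 + ‖lam‖) * x ^ 4 := by
      have q := norm_add_le ((x:ℂ)^3) lam
      rw [norm_pow, Complex.norm_real, Real.norm_of_nonneg (by linarith)] at q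
      have q1 : x ^ 3 ≤ x ^ 4 := pow_le_pow_right₀ h1 (by norm_num)
      have q2 : 1 ≤ x ^ 4 := one_le_pow₀ h1
      nlinarith [norm_nonneg lam]
    calc _ ≤ (1 + ‖lam‖) * x ^ 4 * ‖g x‖ := by gcongr
      _ = (1 + ‖lam‖) * (‖g x‖ * x ^ 4) := by ring
      _ ≤ C := mul_le_mul_of_nonneg_left h3 (by positivity)
  have hb : ∀ x : ℝ, X ≤ x → ‖g x‖ ≤ 1875 := by
    intro x hx
    obtain ⟨h1, -, h3⟩ := hX x hx
    have q2 : 1 ≤ x ^ 4 := one_le_pow₀ h1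
    nlinarith [norm_nonneg (g x)]
  refine ⟨C + 3750, ?_⟩
  filter_upwards [eventually_ge_atTop X] with x hx
  have hC0 : 0 ≤ C := by positivity
  have s1 : ∀ t ∈ Set.Icc x (x+1), ‖deriv g t - deriv g x‖ ≤ C := by
    intro t ht
    have := norm_image_sub_le_of_norm_deriv_le_segment' (f := fun t : ℝ => deriv g t)
      (f' := fun t : ℝ => deriv (deriv g) t) (C := C) (a := x) (b := x+1)
      (fun s _ => ((hd' s).hasDerivAt.comp_ofReal).hasDerivWithinAt)
      (fun s hs => hC s (hx.trans hs.1)) t ht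
    refine this.trans ?_
    nlinarith [ht.1, ht.2]
  have s2 := norm_image_sub_le_of_norm_deriv_le_segment' (f := fun t : ℝ => g t - t * deriv g x)
      (f' := fun t : ℝ => deriv g t - 1 * deriv g x) (C := C) (a := x) (b := x+1)
      (fun s _ => (((hd s).hasDerivAt.comp_ofReal).sub
        ((hasDerivAt_id (s:ℂ)).comp_ofReal.mul_const _)).hasDerivWithinAt)
      (fun s hs => by simpa using s1 s ⟨hs.1, hs.2.le⟩) (x+1) ⟨by linarith, le_rfl⟩
  have s3 := hb x hx
  have s4 := hb (x+1) (by linarith)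
  have s5 : deriv g x = g (x+1 : ℝ) - g x -
    ((g (x+1 : ℝ) - (x+1 : ℝ) * deriv g x) - (g x - x * deriv g x)) := by
    push_cast; ring
  rw [s5]
  refine (norm_sub_le _ _).trans ?_
  have := norm_sub_le (g (x+1:ℝ)) (g x)
  simp only [add_sub_cancel_left, mul_one] at s2
  linarith

lemma aux_zero (g : ℂ → ℂ)
    (h : ∀ᶠ x : ℝ in atTop, 1 ≤ x ∧ g x ≠ 0 ∧ ‖g x‖ * x ^ 4 ≤ 1875) :
    Tendsto (fun x : ℝ => g x) atTop (nhds 0) := by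
  refine squeeze_zero_norm' (a := fun x : ℝ => 1875 / x) ?_ (tendsto_const_nhds.div_atTop tendsto_id)
  filter_upwards [h] with x hx
  obtain ⟨h1, -, h3⟩ := hx
  rw [le_div_iff₀ (by linarith)]
  have q1 : x ≤ x ^ 4 := le_self_pow₀ h1 (by norm_num)
  nlinarith [norm_nonneg (g x)]

/-- An entire solution of `g'' = (z³ + λ) g` with the asymptotics
`g(x) x^{3/4} e^{(2/5) x^{5/2}} → 1` as `x → +∞` is unique. -/
theorem asymptotics_determines_solution (lam : ℂ) (g₁ g₂ : ℂ → ℂ)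
    (h₁diff : Differentiable ℂ g₁) (h₂diff : Differentiable ℂ g₂)
    (h₁eq : ∀ z : ℂ, deriv (deriv g₁) z = (z ^ 3 + lam) * g₁ z)
    (h₂eq : ∀ z : ℂ, deriv (deriv g₂) z = (z ^ 3 + lam) * g₂ z)
    (h₁asym : Tendsto (fun x : ℝ =>
        g₁ (x : ℂ) * ((x ^ ((3 : ℝ) / 4) : ℝ) : ℂ) *
          Complex.exp ((2 / 5 : ℂ) * ((x ^ ((5 : ℝ) / 2) : ℝ) : ℂ)))
      atTop (nhds 1))
    (h₂asym : Tendsto (fun x : ℝ =>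
        g₂ (x : ℂ) * ((x ^ ((3 : ℝ) / 4) : ℝ) : ℂ) *
          Complex.exp ((2 / 5 : ℂ) * ((x ^ ((5 : ℝ) / 2) : ℝ) : ℂ)))
      atTop (nhds 1)) :
    g₁ = g₂ := by
  have d₁ := aux_decay g₁ h₁asym
  have d₂ := aux_decay g₂ h₂asym
  obtain ⟨K₁, b₁⟩ := aux_deriv lam g₁ h₁diff h₁eq d₁
  obtain ⟨K₂, b₂⟩ := aux_deriv lam g₂ h₂diff h₂eq d₂
  have z₁ := aux_zero g₁ d₁
  have z₂ := aux_zero g₂ d₂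
  have hW : ∀ z, HasDerivAt (fun z => deriv g₂ z * g₁ z - g₂ z * deriv g₁ z) 0 z := by
    intro z
    have := ((h₂diff.deriv z).hasDerivAt.mul (h₁diff z).hasDerivAt).sub
      ((h₂diff z).hasDerivAt.mul (h₁diff.deriv z).hasDerivAt)
    refine this.congr_deriv ?_
    rw [h₁eq, h₂eq]; ring
  have hWc : ∀ z w, deriv g₂ z * g₁ z - g₂ z * deriv g₁ z
      = deriv g₂ w * g₁ w - g₂ w * deriv g₁ w :=
    is_const_of_deriv_eq_zero (fun z => (hW z).differentiableAt) (fun z => (hW z).deriv)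
  have hlim : Tendsto (fun x : ℝ => deriv g₂ x * g₁ x - g₂ x * deriv g₁ x) atTop (nhds 0) := by
    have p : Tendsto (fun x : ℝ => deriv g₂ x * g₁ x) atTop (nhds 0) :=
      isBoundedUnder_le_mul_tendsto_zero ⟨K₂, by simpa using b₂⟩ z₁
    have q : Tendsto (fun x : ℝ => g₂ x * deriv g₁ x) atTop (nhds 0) :=
      z₂.zero_mul_isBoundedUnder_le ⟨K₁, by simpa using b₁⟩
    simpa using p.sub q
  have hW0 : ∀ z, deriv g₂ z * g₁ z - g₂ z * deriv g₁ z = 0 := by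
    intro z
    refine tendsto_nhds_unique ?_ hlim
    simp_rw [fun x : ℝ => hWc (x:ℂ) z]
    exact tendsto_const_nhds
  obtain ⟨X, hX⟩ := eventually_atTop.1 d₁
  have hconst : ∀ x : ℝ, X ≤ x → g₂ x / g₁ x = g₂ X / g₁ X := by
    intro x hx
    have hder : ∀ s : ℝ, X ≤ s → HasDerivAt (fun t : ℝ => g₂ t / g₁ t) 0 s := by
      intro s hs
      have := ((h₂diff s).hasDerivAt.comp_ofReal).div ((h₁diff s).hasDerivAt.comp_ofReal)
        (hX s hs).2.1
      rw [hW0, zero_div] at this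
      exact this
    exact constant_of_has_deriv_right_zero (f := fun t : ℝ => g₂ t / g₁ t)
      (fun s hs => (hder s hs.1).continuousAt.continuousWithinAt)
      (fun s hs => (hder s hs.1).hasDerivWithinAt) x ⟨hx, le_rfl⟩
  have hq : Tendsto (fun x : ℝ => g₂ x / g₁ x) atTop (nhds 1) := by
    have := h₂asym.div h₁asym one_ne_zero
    rw [div_one] at this
    refine this.congr' ?_
    filter_upwards [eventually_gt_atTop 0] with x hx
    have t1 : ((x ^ ((3 : ℝ) / 4) : ℝ) : ℂ) ≠ 0 :=
      Complex.ofReal_ne_zero.2 (Real.rpow_pos_of_pos hx _).ne'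
    simp only [Pi.div_apply]
    rw [mul_div_mul_right _ _ (Complex.exp_ne_zero _), mul_div_mul_right _ _ t1]
  have hc1 : g₂ X / g₁ X = 1 := by
    refine tendsto_nhds_unique ?_ hq
    refine tendsto_const_nhds.congr' ?_
    filter_upwards [eventually_ge_atTop X] with x hx using (hconst x hx).symm
  have heq : ∀ x : ℝ, X ≤ x → g₁ x = g₂ x := by
    intro x hx
    have := (hconst x hx).trans hc1
    rw [div_eq_one_iff_eq (hX x hx).2.1] at this
    exact this.symm
  have A₁ : AnalyticOnNhd ℂ g₁ Set.univ := fun z _ => h₁diff.analyticAt z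
  have A₂ : AnalyticOnNhd ℂ g₂ Set.univ := fun z _ => h₂diff.analyticAt z
  refine A₁.eq_of_frequently_eq (z₀ := (X : ℂ)) A₂ ?_
  have ht : Tendsto (fun x : ℝ => (x : ℂ)) (nhdsWithin X (Set.Ioi X)) (nhdsWithin (X:ℂ) {(X:ℂ)}ᶜ) := by
    refine tendsto_nhdsWithin_of_tendsto_nhds_of_eventually_within _
      (Complex.continuous_ofReal.continuousAt.tendsto.mono_left nhdsWithin_le_nhds) ?_
    filter_upwards [self_mem_nhdsWithin] with x hx
    simpa using (ne_of_gt hx)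
  refine ht.frequently (Eventually.frequently ?_)
  filter_upwards [self_mem_nhdsWithin] with x hx using heq x (le_of_lt hx)
end

section
/- Let λ ∈ ℂ and let ψ : [0,∞) → ℂ be a nonzero, twice continuously differentiable function with ψ(0) = 0, ∫₀^∞ |ψ(x)|² dx < ∞, satisfying −ψ''(x) + i·x³·ψ(x) = λ·ψ(x) for all x ≥ 0. Then Re λ > 0 and Im λ > 0. (Eigenvalues of the half-line Dirichlet operator H₊ = p² + ix³ on (0,∞) have positive real and imaginary parts.) -/
open MeasureTheory Set

lemma aux_mono_zero (N : ℝ → ℝ) (a : ℝ) (hm : MonotoneOn N (Ici a)) (h0 : ∀ x, 0 ≤ N x)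
    (hi : IntegrableOn N (Ioi a)) (x : ℝ) (hx : a ≤ x) : N x = 0 := by
  have h1 : IntegrableOn (fun _ : ℝ => N x) (Ioi x) := by
    refine Integrable.mono' (hi.mono_set (Ioi_subset_Ioi hx)) aestronglyMeasurable_const ?_
    refine (ae_restrict_iff' measurableSet_Ioi).2 (Filter.Eventually.of_forall ?_)
    intro y hy
    rw [Real.norm_of_nonneg (h0 x)]
    exact hm hx (le_trans hx (le_of_lt hy)) (le_of_lt hy)
  rw [integrableOn_const_iff] at h1
  simpa using h1

lemma aux_mono (f f' : ℝ → ℝ) (a : ℝ) (ha : 0 ≤ a) (hc : ContinuousOn f (Ici 0))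
    (hd : ∀ x : ℝ, 0 < x → HasDerivAt f (f' x) x) (h : ∀ x, a < x → 0 ≤ f' x) :
    MonotoneOn f (Ici a) := by
  refine monotoneOn_of_deriv_nonneg (convex_Ici a) (hc.mono (Ici_subset_Ici.2 ha)) ?_ ?_
  · intro x hx
    rw [interior_Ici] at hx
    exact (hd x (lt_of_le_of_lt ha hx)).differentiableAt.differentiableWithinAt
  · intro x hx
    rw [interior_Ici] at hx
    rw [(hd x (lt_of_le_of_lt ha hx)).deriv]
    exact h x hx

/-- Eigenvalues of the half-line Dirichlet operator `H₊ = p² + i x³` on `(0,∞)`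
have positive real and imaginary parts. Derivatives are one-sided at `x = 0`
(taken within `[0,∞)`). -/
theorem halfline_eigenvalue_pos (lam : ℂ) (ψ : ℝ → ℂ)
    (hne : ∃ x : ℝ, 0 ≤ x ∧ ψ x ≠ 0)
    (hsmooth : ContDiffOn ℝ 2 ψ (Ici 0))
    (hbc : ψ 0 = 0)
    (hint : IntegrableOn (fun x : ℝ => ‖ψ x‖ ^ 2) (Ioi 0))
    (heq : ∀ x : ℝ, 0 ≤ x →
      -(derivWithin (derivWithin ψ (Ici 0)) (Ici 0) x)
          + Complex.I * (x : ℂ) ^ 3 * ψ x = lam * ψ x) :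
    0 < lam.re ∧ 0 < lam.im := by
  have hφs : ContDiffOn ℝ 1 (derivWithin ψ (Ici 0)) (Ici 0) :=
    hsmooth.derivWithin (uniqueDiffOn_Ici 0) (by norm_num)
  set φ := derivWithin ψ (Ici 0) with hφ
  have hψc : ContinuousOn ψ (Ici 0) := hsmooth.continuousOn
  have hφc : ContinuousOn φ (Ici 0) := hφs.continuousOn
  have hdψ : ∀ x : ℝ, 0 < x → HasDerivAt ψ (φ x) x := fun x hx =>
    ((hsmooth.differentiableOn (by norm_num) x hx.le).hasDerivWithinAt).hasDerivAt (Ici_mem_nhds hx)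
  have hdφ : ∀ x : ℝ, 0 < x → HasDerivAt φ ((Complex.I * (x : ℂ) ^ 3 - lam) * ψ x) x := fun x hx => by
    have h := ((hφs.differentiableOn (by norm_num) x hx.le).hasDerivWithinAt).hasDerivAt
      (Ici_mem_nhds hx)
    refine HasDerivAt.congr_deriv h ?_
    linear_combination -heq x hx.le
  set N : ℝ → ℝ := fun x => ‖ψ x‖ ^ 2 with hN
  set F : ℝ → ℂ := fun x => φ x * star (ψ x) with hF
  have hN0 : ∀ x, 0 ≤ N x := fun x => by positivity
  have hNc : ContinuousOn N (Ici 0) := hψc.norm.pow 2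
  have hFc : ContinuousOn F (Ici 0) := hφc.mul (continuous_star.comp_continuousOn hψc)
  have hRc : ContinuousOn (fun x => (F x).re) (Ici 0) := Complex.continuous_re.comp_continuousOn hFc
  have hIc : ContinuousOn (fun x => (F x).im) (Ici 0) := Complex.continuous_im.comp_continuousOn hFc
  have hF0 : F 0 = 0 := by simp [hF, hbc]
  have hNF : ∀ x, N x = (ψ x).re ^ 2 + (ψ x).im ^ 2 := fun x => by
    simp only [hN, Complex.sq_norm, Complex.normSq_apply]; ring
  have hdN : ∀ x : ℝ, 0 < x → HasDerivAt N (2 * (F x).re) x := fun x hx => by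
    have h := (hdψ x hx).norm_sq
    refine HasDerivAt.congr_deriv h ?_
    simp [hF, Complex.inner]
    try ring
  have hdF : ∀ x : ℝ, 0 < x → HasDerivAt F
      ((Complex.I * (x : ℂ) ^ 3 - lam) * ψ x * star (ψ x) + φ x * star (φ x)) x := fun x hx =>
    (hdφ x hx).mul (hdψ x hx).star
  have hdR : ∀ x : ℝ, 0 < x → HasDerivAt (fun x => (F x).re) (‖φ x‖ ^ 2 - lam.re * N x) x :=
    fun x hx => by
    have h := Complex.reCLM.hasFDerivAt.comp_hasDerivAt x (hdF x hx)
    refine HasDerivAt.congr_deriv h ?_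
    rw [hNF, Complex.sq_norm, Complex.normSq_apply]
    simp [← Complex.ofReal_pow]
    ring
  have hdI : ∀ x : ℝ, 0 < x → HasDerivAt (fun x => (F x).im) ((x ^ 3 - lam.im) * N x) x :=
    fun x hx => by
    have h := Complex.imCLM.hasFDerivAt.comp_hasDerivAt x (hdF x hx)
    refine HasDerivAt.congr_deriv h ?_
    rw [hNF]
    simp [← Complex.ofReal_pow]
    ring
  obtain ⟨y, hy0, hy⟩ := hne
  have hypos : 0 < y := lt_of_le_of_ne hy0 (by rintro rfl; exact hy hbc)
  have hNy : 0 < N y := by have := norm_pos_iff.2 hy; positivity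
  -- if Re F ≥ 0 eventually then N vanishes eventually
  have key : ∀ a, 0 ≤ a → (∀ x, a < x → 0 ≤ (F x).re) → ∀ x, a ≤ x → N x = 0 := by
    intro a ha h
    refine aux_mono_zero N a (aux_mono N _ a ha hNc hdN fun x hx => ?_) hN0
      (hint.mono_set (Ioi_subset_Ioi ha))
    have := h x hx
    positivity
  constructor
  · by_contra hre
    have hm := aux_mono _ _ 0 le_rfl hRc hdR (fun x _ => by
      nlinarith [sq_nonneg ‖φ x‖, hN0 x])
    have := key 0 le_rfl (fun x hx => by
      simpa [hF0] using hm (self_mem_Ici) hx.le hx.le) y hy0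
    linarith
  · by_contra him
    have hm := aux_mono _ _ 0 le_rfl hIc hdI (fun x hx => by
      have : 0 ≤ x ^ 3 := by positivity
      exact mul_nonneg (by linarith) (hN0 x))
    have hnn : ∀ x, 0 ≤ x → 0 ≤ (F x).im := fun x hx => by
      simpa [hF0] using hm (self_mem_Ici) hx hx
    obtain ⟨z, hz0, hz⟩ : ∃ z, 0 ≤ z ∧ 0 < (F z).im := by
      by_contra! hcon
      have he : (fun x => (F x).im) =ᶠ[nhds y] fun _ => 0 := by
        filter_upwards [Ioi_mem_nhds hypos] with x hx
        exact le_antisymm (hcon x (le_of_lt hx)) (hnn x (le_of_lt hx))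
      have h1 := (hdI y hypos).unique ((hasDerivAt_const y (0:ℝ)).congr_of_eventuallyEq he)
      have : 0 < y ^ 3 := by positivity
      have : 0 < (y ^ 3 - lam.im) * N y := mul_pos (by linarith) hNy
      linarith
    set c := (F z).im with hc
    have hcF : ∀ x, z ≤ x → c ≤ ‖φ x‖ * ‖ψ x‖ := fun x hx => by
      have h1 : c ≤ (F x).im := hm hz0 (hz0.trans hx) hx
      have h2 : (F x).im ≤ ‖F x‖ := (le_abs_self _).trans (Complex.abs_im_le_norm _)
      have h3 : ‖F x‖ = ‖φ x‖ * ‖ψ x‖ := by simp [hF]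
      linarith
    set P : ℝ → ℝ := fun x => ∫ t in (0:ℝ)..x, N t with hP
    set M := ∫ t in Ioi (0:ℝ), N t with hM
    have hii : ∀ x, 0 ≤ x → IntervalIntegrable N volume 0 x := fun x hx =>
      (hNc.mono (by rw [uIcc_of_le hx]; exact Icc_subset_Ici_self)).intervalIntegrable
    have hdP : ∀ x : ℝ, 0 < x → HasDerivAt P (N x) x := fun x hx => by
      refine intervalIntegral.integral_hasDerivAt_right (hii x hx.le) ?_
        (hNc.continuousAt (Ici_mem_nhds hx))
      exact (hNc.mono Ioi_subset_Ici_self).stronglyMeasurableAtFilter isOpen_Ioi x hx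
    have hP0 : ∀ x, 0 ≤ x → 0 ≤ P x := fun x hx =>
      intervalIntegral.integral_nonneg hx fun t _ => hN0 t
    have hPM : ∀ x, 0 ≤ x → P x ≤ M := fun x hx => by
      simp only [hP, hM]
      rw [intervalIntegral.integral_of_le hx]
      exact setIntegral_mono_set hint (Filter.Eventually.of_forall hN0)
        (Filter.Eventually.of_forall fun t ht => ht.1)
    have hz1 : 0 < z + 1 := by linarith
    set G : ℝ → ℝ := fun x => (F x).re + (1 + lam.re) * P x - 2 * c * x with hG
    have hdG : ∀ x : ℝ, 0 < x → HasDerivAt G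
        ((‖φ x‖ ^ 2 - lam.re * N x) + (1 + lam.re) * N x - 2 * c * 1) x := fun x hx =>
      ((hdR x hx).add ((hdP x hx).const_mul _)).sub ((hasDerivAt_id x).const_mul _)
    have hGm : MonotoneOn G (Ici (z + 1)) := by
      have hpos : ∀ x ∈ Ici (z+1), 0 < x := fun x hx => lt_of_lt_of_le hz1 hx
      refine monotoneOn_of_deriv_nonneg (convex_Ici _)
        (fun x hx => (hdG x (hpos x hx)).continuousAt.continuousWithinAt)
        (fun x hx => (hdG x (hpos x (interior_subset hx))).differentiableAt.differentiableWithinAt)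
        fun x hx => ?_
      have hx' := interior_subset hx
      rw [(hdG x (hpos x hx')).deriv]
      have h1 := hcF x (by have : z + 1 ≤ x := hx'
                           linarith)
      have h2 : N x = ‖ψ x‖ ^ 2 := rfl
      nlinarith [sq_nonneg (‖φ x‖ - ‖ψ x‖)]
    set K := |1 + lam.re| * M - G (z + 1) with hK
    set a := max (z + 1) (K / (2 * c)) with ha
    have haz : z + 1 ≤ a := le_max_left _ _
    have hNa := key a (by linarith) (fun x hx => by
      have hx1 : z + 1 ≤ x := by linarith
      have h1 : G (z + 1) ≤ G x := hGm self_mem_Ici hx1 hx1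
      have h2 : (1 + lam.re) * P x ≤ |1 + lam.re| * M :=
        mul_le_mul (le_abs_self _) (hPM x (by linarith)) (hP0 x (by linarith)) (abs_nonneg _)
      have h3 : K / (2 * c) ≤ x := (le_max_right _ _).trans hx.le
      rw [div_le_iff₀ (by positivity)] at h3
      simp only [hG] at h1 hK
      linarith) a le_rfl
    have h1 := hcF a (by linarith)
    have h2 : ‖ψ a‖ = 0 := by simpa [hN] using hNa
    rw [h2] at h1
    linarith
end

section
/- ∫₀^∞ (√(t³ + 1) − t^{3/2}) dt = 2·∫₀¹ √(1 − t³) dt. (The constant K' from the Liouville–Green normalization equals the turning-point constant K.) -/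
open MeasureTheory

lemma aux_int : IntegrableOn (fun t : ℝ => 1 / Real.sqrt (t ^ 3 + 1)) (Set.Ioi 0) := by
  have h := (integrableOn_add_rpow_Ioi_of_lt (a := -(3/2)) (c := 0) (m := 1)
    (by norm_num) (by norm_num)).const_mul 2
  refine Integrable.mono' h ?_ ?_
  · exact (by fun_prop : Measurable (fun t : ℝ => 1 / Real.sqrt (t ^ 3 + 1))).aestronglyMeasurable
  · filter_upwards [ae_restrict_mem measurableSet_Ioi] with t ht
    have ht : 0 < t := ht
    rw [Real.norm_of_nonneg (by positivity)]
    have e : (t + 1) ^ (-(3/2) : ℝ) = 1 / Real.sqrt ((t+1)^3) := by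
      rw [Real.rpow_neg (by positivity), Real.sqrt_eq_rpow, ← Real.rpow_natCast,
        ← Real.rpow_mul (by positivity)]
      norm_num
    rw [e]
    have h2 : Real.sqrt ((t+1)^3) ≤ 2 * Real.sqrt (t^3+1) := by
      rw [Real.sqrt_le_left (by positivity), mul_pow, Real.sq_sqrt (by positivity)]
      nlinarith [mul_nonneg ht.le (sq_nonneg (t-1)), sq_nonneg (t-1)]
    have p1 : 0 < Real.sqrt ((t+1)^3) := Real.sqrt_pos.2 (by positivity)
    have p2 : 0 < Real.sqrt (t^3+1) := Real.sqrt_pos.2 (by positivity)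
    rw [mul_one_div, div_le_div_iff₀ p2 p1]
    linarith

lemma aux_image : (fun s : ℝ => (s^4 + 8*s) / (4 * (1 - s^3))) '' Set.Ioo 0 1 = Set.Ioi 0 := by
  ext y
  constructor
  · rintro ⟨s, ⟨h0, h1⟩, rfl⟩
    have : 0 < 1 - s^3 := by
      have := pow_lt_one₀ h0.le h1 (n := 3) (by norm_num)
      linarith
    show 0 < (s^4 + 8*s) / (4 * (1 - s^3))
    positivity
  · intro hy
    have hy : 0 < y := hy
    have hc : ContinuousOn (fun s : ℝ => s^4 + 8*s - 4*y*(1-s^3)) (Set.Icc 0 1) := by fun_prop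
    have := intermediate_value_Ioo (zero_le_one) hc
    obtain ⟨s, hs, he⟩ := this (show (0:ℝ) ∈ _ by constructor <;> norm_num; exact hy)
    refine ⟨s, hs, ?_⟩
    have : 0 < 1 - s^3 := by
      have := pow_lt_one₀ hs.1.le hs.2 (n := 3) (by norm_num)
      linarith
    simp only at he ⊢
    rw [div_eq_iff (by positivity)]
    linarith

lemma aux_inj : Set.InjOn (fun s : ℝ => (s^4 + 8*s) / (4 * (1 - s^3))) (Set.Ioo 0 1) := by
  apply StrictMonoOn.injOn
  intro a ha b hb hab
  have hb3 : 0 < 1 - b^3 := by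
    have := pow_lt_one₀ hb.1.le hb.2 (n := 3) (by norm_num)
    linarith
  have h3 : a^3 < b^3 := pow_lt_pow_left₀ hab ha.1.le (by norm_num)
  have h4 : a^4 < b^4 := pow_lt_pow_left₀ hab ha.1.le (by norm_num)
  have hb0 := hb.1
  exact div_lt_div₀ (by linarith) (by linarith) (by positivity) (by positivity)

lemma aux_deriv_s19 (s : ℝ) (hs : s ∈ Set.Ioo (0:ℝ) 1) :
    HasDerivWithinAt (fun s : ℝ => (s^4 + 8*s) / (4 * (1 - s^3)))
      ((8 + 20*s^3 - s^6) / (4 * (1-s^3)^2)) (Set.Ioo 0 1) s := by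
  have h3 : 0 < 1 - s^3 := by
    have := pow_lt_one₀ hs.1.le hs.2 (n := 3) (by norm_num)
    linarith
  apply HasDerivAt.hasDerivWithinAt
  have h1 : HasDerivAt (fun s : ℝ => s^4 + 8*s) (4*s^3 + 8) s := by
    refine ((hasDerivAt_pow 4 s).add ((hasDerivAt_id s).const_mul 8)).congr_deriv ?_
    norm_num
  have h2 : HasDerivAt (fun s : ℝ => 4 * (1 - s^3)) (4 * (-(3*s^2))) s := by
    simpa using ((hasDerivAt_pow 3 s).const_sub 1).const_mul 4
  refine (h1.div h2 (by positivity)).congr_deriv ?_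
  have h3' := h3.ne'
  field_simp
  ring

lemma aux_val (s : ℝ) (hs : s ∈ Set.Ioo (0:ℝ) 1) :
    |(8 + 20*s^3 - s^6) / (4 * (1-s^3)^2)| •
      (1 / Real.sqrt (((s^4 + 8*s) / (4 * (1 - s^3)))^3 + 1)) = 2 * (1 / Real.sqrt (1 - s^3)) := by
  have h3 : 0 < 1 - s^3 := by
    have := pow_lt_one₀ hs.1.le hs.2 (n := 3) (by norm_num)
    linarith
  have h0 := hs.1
  have hN : 0 < 8 + 20*s^3 - s^6 := by
    have : 0 < s^3 := by positivity
    nlinarith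
  have hq : 0 < Real.sqrt (1 - s^3) := Real.sqrt_pos.2 h3
  have hq2 : Real.sqrt (1 - s^3) ^ 2 = 1 - s^3 := Real.sq_sqrt h3.le
  have e : Real.sqrt (((s^4 + 8*s) / (4 * (1 - s^3)))^3 + 1)
      = (8 + 20*s^3 - s^6) / (8 * (1 - s^3) * Real.sqrt (1 - s^3)) := by
    rw [Real.sqrt_eq_iff_mul_self_eq (by positivity) (by positivity), ← sq, div_pow, mul_pow, div_pow _ (8 * (1 - s^3) * Real.sqrt (1 - s^3)),
      mul_pow _ (Real.sqrt (1 - s^3)), hq2]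
    field_simp
    ring
  rw [e, abs_of_pos (by positivity), smul_eq_mul]
  generalize Real.sqrt (1 - s^3) = q at *
  rw [← hq2]
  field_simp
  norm_num

lemma aux_int2 : IntegrableOn (fun s : ℝ => 2 * (1 / Real.sqrt (1 - s^3))) (Set.Ioo 0 1) := by
  have h := aux_int
  rw [← aux_image, integrableOn_image_iff_integrableOn_abs_deriv_smul measurableSet_Ioo
    aux_deriv_s19 aux_inj] at h
  exact h.congr_fun aux_val measurableSet_Ioo

lemma aux_eq : ∫ t in Set.Ioi (0:ℝ), 1 / Real.sqrt (t ^ 3 + 1)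
    = ∫ s in Set.Ioo (0:ℝ) 1, 2 * (1 / Real.sqrt (1 - s^3)) := by
  rw [← aux_image, integral_image_eq_integral_abs_deriv_smul measurableSet_Ioo
    aux_deriv_s19 aux_inj]
  exact setIntegral_congr_fun measurableSet_Ioo aux_val

lemma aux_R : 2 * ∫ t in (0:ℝ)..1, Real.sqrt (1 - t ^ 3)
    = (3/5) * ∫ s in Set.Ioo (0:ℝ) 1, 2 * (1 / Real.sqrt (1 - s^3)) := by
  have hi : IntervalIntegrable (fun s : ℝ => 2 * (1 / Real.sqrt (1 - s^3))) volume 0 1 := by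
    rw [intervalIntegrable_iff_integrableOn_Ioo_of_le zero_le_one]
    exact aux_int2
  have hs : IntervalIntegrable (fun s : ℝ => Real.sqrt (1 - s^3)) volume 0 1 :=
    (by fun_prop : Continuous (fun s : ℝ => Real.sqrt (1 - s^3))).intervalIntegrable _ _
  have key := intervalIntegral.integral_eq_sub_of_hasDerivAt_of_le (a := 0) (b := 1)
    (f := fun t : ℝ => (4/5) * (t * Real.sqrt (1 - t^3)))
    (f' := fun t => 2 * Real.sqrt (1 - t^3) - (3/5) * (2 * (1 / Real.sqrt (1 - t^3))))
    zero_le_one (by fun_prop) ?_ ((hs.const_mul 2).sub (hi.const_mul (3/5)))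
  · rw [intervalIntegral.integral_sub (hs.const_mul 2) (hi.const_mul (3/5)),
      intervalIntegral.integral_const_mul, intervalIntegral.integral_const_mul,
      intervalIntegral.integral_of_le (f := fun s : ℝ => 2 * (1 / Real.sqrt (1 - s^3))) zero_le_one,
      integral_Ioc_eq_integral_Ioo] at key
    norm_num at key ⊢
    linarith
  · intro s hs
    have h3 : 0 < 1 - s^3 := by
      have := pow_lt_one₀ hs.1.le hs.2 (n := 3) (by norm_num)
      linarith
    have h1 : HasDerivAt (fun s : ℝ => 1 - s^3) (-(3*s^2)) s := by
      simpa using ((hasDerivAt_pow 3 s).const_sub 1)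
    have h2 := ((hasDerivAt_id s).mul (h1.sqrt h3.ne')).const_mul (4/5)
    refine h2.congr_deriv ?_
    have hq : 0 < Real.sqrt (1 - s^3) := Real.sqrt_pos.2 h3
    have hq2 : Real.sqrt (1 - s^3) ^ 2 = 1 - s^3 := Real.sq_sqrt h3.le
    simp only [id]
    generalize Real.sqrt (1 - s^3) = q at *
    field_simp
    linear_combination (-12) * hq2

lemma aux_bd (t : ℝ) (ht : 0 < t) : 0 ≤ Real.sqrt (t^3+1) - Real.sqrt (t^3) ∧
    Real.sqrt (t^3+1) - Real.sqrt (t^3) ≤ 1 / Real.sqrt (t^3+1) := by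
  have p2 : 0 < Real.sqrt (t^3+1) := Real.sqrt_pos.2 (by positivity)
  have p1 : 0 < Real.sqrt (t^3) := Real.sqrt_pos.2 (by positivity)
  have hle : Real.sqrt (t^3) ≤ Real.sqrt (t^3+1) := Real.sqrt_le_sqrt (by linarith)
  refine ⟨by linarith, ?_⟩
  rw [le_div_iff₀ p2]
  have e1 : Real.sqrt (t^3+1) ^ 2 = t^3+1 := Real.sq_sqrt (by positivity)
  have e2 : Real.sqrt (t^3) ^ 2 = t^3 := Real.sq_sqrt (by positivity)
  nlinarith

lemma aux_int3 : IntegrableOn (fun t : ℝ => Real.sqrt (t^3+1) - Real.sqrt (t^3)) (Set.Ioi 0) := by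
  refine Integrable.mono' aux_int ?_ ?_
  · exact (by fun_prop : Measurable
      (fun t : ℝ => Real.sqrt (t^3+1) - Real.sqrt (t^3))).aestronglyMeasurable
  · filter_upwards [ae_restrict_mem measurableSet_Ioi] with t ht
    rw [Real.norm_of_nonneg (aux_bd t ht).1]
    exact (aux_bd t ht).2

lemma aux_L : ∫ t in Set.Ioi (0:ℝ), (Real.sqrt (t^3+1) - Real.sqrt (t^3))
    = (3/5) * ∫ t in Set.Ioi (0:ℝ), 1 / Real.sqrt (t ^ 3 + 1) := by
  have key := integral_Ioi_of_hasDerivAt_of_tendsto (a := 0) (m := (0:ℝ))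
    (f := fun t : ℝ => (2/5) * (t * (Real.sqrt (t^3+1) - Real.sqrt (t^3))))
    (f' := fun t => (Real.sqrt (t^3+1) - Real.sqrt (t^3)) - (3/5) * (1 / Real.sqrt (t^3+1)))
    (Continuous.continuousWithinAt (by fun_prop)) ?_ (aux_int3.sub (aux_int.const_mul (3/5))) ?_
  · rw [integral_sub aux_int3 (aux_int.const_mul (3/5)), integral_const_mul] at key
    norm_num at key ⊢
    linarith
  · intro t ht
    have ht : 0 < t := ht
    have h0 : HasDerivAt (fun s : ℝ => s^3) (3*t^2) t := by
      simpa using (hasDerivAt_pow 3 t)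
    have h1 := h0.add_const 1
    have hp : 0 < t^3 := by positivity
    have h2 := ((hasDerivAt_id t).mul ((h1.sqrt (by positivity)).sub
      (h0.sqrt hp.ne'))).const_mul (2/5)
    refine h2.congr_deriv ?_
    have p2 : 0 < Real.sqrt (t^3+1) := Real.sqrt_pos.2 (by positivity)
    have p1 : 0 < Real.sqrt (t^3) := Real.sqrt_pos.2 (by positivity)
    have e1 : Real.sqrt (t^3+1) ^ 2 = t^3+1 := Real.sq_sqrt (by positivity)
    have e2 : Real.sqrt (t^3) ^ 2 = t^3 := Real.sq_sqrt (by positivity)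
    simp only [id, Pi.sub_apply]
    generalize Real.sqrt (t^3+1) = q at *
    generalize Real.sqrt (t^3) = r at *
    field_simp
    linear_combination (-3*r) * e1 + (3*q)*e2
  · have hz : Filter.Tendsto (fun t : ℝ => t ^ (-(1/2) : ℝ)) Filter.atTop (nhds 0) :=
      tendsto_rpow_neg_atTop (by norm_num)
    refine squeeze_zero' ?_ ?_ hz
    · filter_upwards [Filter.eventually_gt_atTop 0] with t ht
      have := (aux_bd t ht).1
      positivity
    · filter_upwards [Filter.eventually_gt_atTop 0] with t ht
      obtain ⟨b0, b1⟩ := aux_bd t ht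
      have hs : 0 < Real.sqrt t := Real.sqrt_pos.2 ht
      have p2 : 0 < Real.sqrt (t^3+1) := Real.sqrt_pos.2 (by positivity)
      have h4 : t * Real.sqrt t ≤ Real.sqrt (t^3+1) := by
        apply Real.le_sqrt_of_sq_le
        rw [mul_pow, Real.sq_sqrt ht.le]
        nlinarith
      rw [Real.rpow_neg ht.le, ← Real.sqrt_eq_rpow, ← one_div]
      have : t * (Real.sqrt (t^3+1) - Real.sqrt (t^3)) ≤ 1 / Real.sqrt t := by
        calc _ ≤ t * (1 / Real.sqrt (t^3+1)) := by gcongr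
          _ ≤ _ := by
            rw [mul_one_div, div_le_div_iff₀ p2 hs]
            linarith
      have : 0 ≤ t * (Real.sqrt (t^3+1) - Real.sqrt (t^3)) := by positivity
      linarith


/-- The Liouville–Green normalization constant equals the turning-point constant:
`∫₀^∞ (√(t³+1) - t^{3/2}) dt = 2 ∫₀¹ √(1-t³) dt`. -/
theorem K_prime_eq_K :
    (∫ t in Set.Ioi (0 : ℝ), (Real.sqrt (t ^ 3 + 1) - t ^ ((3 : ℝ) / 2))) =
      2 * ∫ t in (0:ℝ)..1, Real.sqrt (1 - t ^ 3) := by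

  rw [aux_R, ← aux_eq, ← aux_L]
  refine setIntegral_congr_fun measurableSet_Ioi ?_
  intro t ht
  have ht : 0 < t := ht
  have e : t ^ ((3:ℝ)/2) = Real.sqrt (t^3) := by
    rw [Real.sqrt_eq_rpow, ← Real.rpow_natCast, ← Real.rpow_mul ht.le]
    norm_num
  simp only [e]
end
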